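/- arXiv:1803.10885 — 2 statements merged into one kernel-verified Lean document; each statement's English description precedes it below -/
import Mathlib

section
/- Let d ∈ ℕ, let M and K be skew-symmetric d × d real matrices, let a, b ∈ ℝ, Δt, Δx > 0, and for each (j,n) ∈ ℤ × ℤ let B_j^n be a symmetric d × d real matrix. Suppose U, V : ℤ × ℤ → ℝ^d each satisfy, for all (j,n), the linear variational equation M (δ_t^{a/2} A_x^{b/2} w)_j^n + K (δ_x^{b/2} A_t^{a/2} w)_j^n = B_j^n (A_t^{a/2} A_x^{b/2} w)_j^n (for w = U and w = V). Then for all (j,n) the discrete stochastic conformal multi-symplectic conservation law holds: δ_t^{a}(⟨M A_x^{b/2} U, A_x^{b/2} V⟩)_j^n + δ_x^{b}(⟨K A_t^{a/2} U, A_t^{a/2} V⟩)_j^n = 0, where δ_t^a and δ_x^b act on the scalar families (j,n) ↦ ⟨M A_x^{b/2} U_j^n, A_x^{b/2} V_j^n⟩ and (j,n) ↦ ⟨K A_t^{a/2} U_j^n, A_t^{a/2} V_j^n⟩, and ⟨·,·⟩ is the Euclidean inner product on ℝ^d. -/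
/-!
Since `e^{-cΔ}` is the square of `e^{-cΔ/2}`, a skew form `⟨P z, w⟩` obeys an exact discrete Leibniz
rule `δ^c ⟨P z, w⟩ = ⟨P δ^{c/2} z, A^{c/2} w⟩ - ⟨A^{c/2} z, P δ^{c/2} w⟩` (`dtS_skew`, `dxS_skew`).
The averaging operators commute (`AxV_AtV_comm`), so adding the rules for `M` in time and `K` in
space and inserting the variational equations leaves `⟨B Ū, V̄⟩ - ⟨Ū, B V̄⟩`, with `Ū`, `V̄` the fully
averaged `U`, `V`; this vanishes because `B` is symmetric.
-/

noncomputable section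

open Matrix

/-- Discrete temporal difference operator `δ_t^c` with step `Δt` on `ℝ^d`-valued families. -/
def dtV {d : ℕ} (Δt c : ℝ) (z : ℤ × ℤ → Fin d → ℝ) : ℤ × ℤ → Fin d → ℝ :=
  fun p => Δt⁻¹ • (z (p.1, p.2 + 1) - Real.exp (-c * Δt) • z p)

/-- Discrete spatial difference operator `δ_x^c` with step `Δx` on `ℝ^d`-valued families. -/
def dxV {d : ℕ} (Δx c : ℝ) (z : ℤ × ℤ → Fin d → ℝ) : ℤ × ℤ → Fin d → ℝ :=
  fun p => Δx⁻¹ • (z (p.1 + 1, p.2) - Real.exp (-c * Δx) • z p)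

/-- Discrete temporal averaging operator `A_t^c` with step `Δt` on `ℝ^d`-valued families. -/
def AtV {d : ℕ} (Δt c : ℝ) (z : ℤ × ℤ → Fin d → ℝ) : ℤ × ℤ → Fin d → ℝ :=
  fun p => (2 : ℝ)⁻¹ • (z (p.1, p.2 + 1) + Real.exp (-c * Δt) • z p)

/-- Discrete spatial averaging operator `A_x^c` with step `Δx` on `ℝ^d`-valued families. -/
def AxV {d : ℕ} (Δx c : ℝ) (z : ℤ × ℤ → Fin d → ℝ) : ℤ × ℤ → Fin d → ℝ :=
  fun p => (2 : ℝ)⁻¹ • (z (p.1 + 1, p.2) + Real.exp (-c * Δx) • z p)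

/-- Discrete temporal difference operator on scalar families. -/
def dtS (Δt c : ℝ) (z : ℤ × ℤ → ℝ) : ℤ × ℤ → ℝ :=
  fun p => (z (p.1, p.2 + 1) - Real.exp (-c * Δt) * z p) / Δt

/-- Discrete spatial difference operator on scalar families. -/
def dxS (Δx c : ℝ) (z : ℤ × ℤ → ℝ) : ℤ × ℤ → ℝ :=
  fun p => (z (p.1 + 1, p.2) - Real.exp (-c * Δx) * z p) / Δx

/-- Discrete Leibniz rule for a skew form, with `x`, `y` the new and old values and `e` the half-step
damping factor: differences and averages damped by `e` produce a difference damped by `e ^ 2`. -/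
lemma skew_leibniz {d : ℕ} (P : Matrix (Fin d) (Fin d) ℝ) (hP : Pᵀ = -P) (h e : ℝ)
    (x y x' y' : Fin d → ℝ) :
    (P *ᵥ x ⬝ᵥ x' - e ^ 2 * (P *ᵥ y ⬝ᵥ y')) / h
      = P *ᵥ (h⁻¹ • (x - e • y)) ⬝ᵥ ((2 : ℝ)⁻¹ • (x' + e • y'))
        - ((2 : ℝ)⁻¹ • (x + e • y)) ⬝ᵥ P *ᵥ (h⁻¹ • (x' - e • y')) := by
  have key : ∀ u v : Fin d → ℝ, u ⬝ᵥ P *ᵥ v = -(P *ᵥ u ⬝ᵥ v) := by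
    intro u v
    rw [dotProduct_mulVec, ← mulVec_transpose, hP, neg_mulVec, neg_dotProduct]
  rw [key]
  simp only [mulVec_add, mulVec_sub, mulVec_smul, add_dotProduct, sub_dotProduct, smul_dotProduct,
    dotProduct_add, dotProduct_sub, dotProduct_smul, smul_eq_mul]
  ring

lemma exp_half_sq (c h : ℝ) : Real.exp (-c * h) = Real.exp (-(c / 2) * h) ^ 2 := by
  rw [← Real.exp_nat_mul]
  congr 1
  push_cast
  ring

lemma AxV_AtV_comm {d : ℕ} (Δt Δx c c' : ℝ) (z : ℤ × ℤ → Fin d → ℝ) (p : ℤ × ℤ) :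
    AxV Δx c' (AtV Δt c z) p = AtV Δt c (AxV Δx c' z) p := by
  ext i
  simp only [AxV, AtV, Pi.smul_apply, Pi.add_apply, smul_eq_mul]
  ring

lemma dtS_skew {d : ℕ} (P : Matrix (Fin d) (Fin d) ℝ) (hP : Pᵀ = -P) (Δt c : ℝ)
    (z w : ℤ × ℤ → Fin d → ℝ) (p : ℤ × ℤ) :
    dtS Δt c (fun q => P *ᵥ z q ⬝ᵥ w q) p
      = P *ᵥ dtV Δt (c / 2) z p ⬝ᵥ AtV Δt (c / 2) w p
        - AtV Δt (c / 2) z p ⬝ᵥ P *ᵥ dtV Δt (c / 2) w p := by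
  simp only [dtS, dtV, AtV]
  rw [exp_half_sq]
  exact skew_leibniz P hP _ _ _ _ _ _

lemma dxS_skew {d : ℕ} (P : Matrix (Fin d) (Fin d) ℝ) (hP : Pᵀ = -P) (Δx c : ℝ)
    (z w : ℤ × ℤ → Fin d → ℝ) (p : ℤ × ℤ) :
    dxS Δx c (fun q => P *ᵥ z q ⬝ᵥ w q) p
      = P *ᵥ dxV Δx (c / 2) z p ⬝ᵥ AxV Δx (c / 2) w p
        - AxV Δx (c / 2) z p ⬝ᵥ P *ᵥ dxV Δx (c / 2) w p := by
  simp only [dxS, dxV, AxV]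
  rw [exp_half_sq]
  exact skew_leibniz P hP _ _ _ _ _ _

/-- The discrete stochastic conformal multi-symplectic conservation law: if `U` and `V`
satisfy the linear variational equation of the conformal multi-symplectic scheme (with
symmetric matrices `B_j^n` playing the role of the Hessians plus noise factor), then
`δ_t^a ⟨M A_x^{b/2} U, A_x^{b/2} V⟩ + δ_x^b ⟨K A_t^{a/2} U, A_t^{a/2} V⟩ = 0`. -/
theorem stmt_2 {d : ℕ} (M K : Matrix (Fin d) (Fin d) ℝ)
    (hM : Mᵀ = -M) (hK : Kᵀ = -K)
    (a b Δt Δx : ℝ) (hΔt : 0 < Δt) (hΔx : 0 < Δx)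
    (B : ℤ × ℤ → Matrix (Fin d) (Fin d) ℝ) (hB : ∀ p, (B p)ᵀ = B p)
    (U V : ℤ × ℤ → Fin d → ℝ)
    (hU : ∀ j n : ℤ,
      M.mulVec (dtV Δt (a / 2) (AxV Δx (b / 2) U) (j, n))
        + K.mulVec (dxV Δx (b / 2) (AtV Δt (a / 2) U) (j, n))
      = (B (j, n)).mulVec (AtV Δt (a / 2) (AxV Δx (b / 2) U) (j, n)))
    (hV : ∀ j n : ℤ,
      M.mulVec (dtV Δt (a / 2) (AxV Δx (b / 2) V) (j, n))
        + K.mulVec (dxV Δx (b / 2) (AtV Δt (a / 2) V) (j, n))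
      = (B (j, n)).mulVec (AtV Δt (a / 2) (AxV Δx (b / 2) V) (j, n))) :
    ∀ j n : ℤ,
      dtS Δt a (fun p => M.mulVec (AxV Δx (b / 2) U p) ⬝ᵥ AxV Δx (b / 2) V p) (j, n)
        + dxS Δx b (fun p => K.mulVec (AtV Δt (a / 2) U p) ⬝ᵥ AtV Δt (a / 2) V p) (j, n)
      = 0 := by
  intro j n
  rw [dtS_skew M hM, dxS_skew K hK, AxV_AtV_comm, AxV_AtV_comm]
  -- Pair the equation for `U` with the averaged `V`, and the one for `V` with the averaged `U`.
  have h1 := congrArg (· ⬝ᵥ AtV Δt (a / 2) (AxV Δx (b / 2) V) (j, n)) (hU j n)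
  have h2 := congrArg (AtV Δt (a / 2) (AxV Δx (b / 2) U) (j, n) ⬝ᵥ ·) (hV j n)
  simp only [add_dotProduct, dotProduct_add] at h1 h2
  rw [dotProduct_mulVec _ (B (j, n)), ← mulVec_transpose, hB] at h2
  linarith
end
end

section
/- Let α > 0, γ ∈ ℝ, let c : ℝ × ℝ → ℝ be continuous, and let φ, u, v, ω : ℝ × ℝ → ℝ be sufficiently smooth (φ, u twice and v once continuously differentiable in (t,x)). Set z = (φ, u, v, ω) : ℝ² → ℝ⁴, S₁(z) = u³ − uω + (1/2)v², S₂(z) = γφ, and let M, K, D be the 4×4 matrices M = [[0,1/2,0,0],[−1/2,0,0,0],[0,0,0,0],[0,0,0,0]], K = [[0,0,0,1],[0,0,−1,0],[0,1,0,0],[−1,0,0,0]], D = [[0,α/2,0,0],[−α/2,0,0,0],[0,0,0,0],[0,0,0,0]]. If z satisfies the damped Hamiltonian system M ∂z/∂t + K ∂z/∂x = ∇S₁(z) + ∇S₂(z)·c + Dz pointwise, then ∂u/∂x = v, ∂φ/∂x = u, and u satisfies the damped forced Korteweg–de Vries equation ∂u/∂t + 6u ∂u/∂x + ∂³u/∂x³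 = αu + γc pointwise. -/
/-!
The four rows of the Hamiltonian system read
`u_t / 2 + ω_x = γ c + (α/2) u`, `-φ_t / 2 - v_x = 3u² - ω - (α/2) φ`, `u_x = v`, `φ_x = u`.
Since `v = u_x`, the second row expresses `u_xx` as `ω - 3u² - φ_t / 2 + (α/2) φ`, which is
differentiable in `x`; in particular `u_xxx` exists although `u` is only assumed `C²`. Symmetry of
the second derivative of `φ` (`hasDerivAt_deriv_swap`) gives `φ_tx = φ_xt = u_t`, and substituting
`ω_x` from the first row yields the damped forced KdV equation.
-/

noncomputable section

open Matrix

/-- The skew-symmetric matrix `M` of the damped KdV Hamiltonian formulation. -/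
def Mkdv : Matrix (Fin 4) (Fin 4) ℝ :=
  !![0, 1/2, 0, 0; -(1/2), 0, 0, 0; 0, 0, 0, 0; 0, 0, 0, 0]

/-- The skew-symmetric matrix `K` of the damped KdV Hamiltonian formulation. -/
def Kkdv : Matrix (Fin 4) (Fin 4) ℝ :=
  !![0, 0, 0, 1; 0, 0, -1, 0; 0, 1, 0, 0; -1, 0, 0, 0]

/-- The damping matrix `D` of the damped KdV Hamiltonian formulation. -/
def Dkdv (α : ℝ) : Matrix (Fin 4) (Fin 4) ℝ :=
  !![0, α/2, 0, 0; -(α/2), 0, 0, 0; 0, 0, 0, 0; 0, 0, 0, 0]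

/-- The gradient of `S₁(z) = u³ − uω + (1/2)v²` with respect to `z = (φ, u, v, ω)`. -/
def gradS1kdv (w : Fin 4 → ℝ) : Fin 4 → ℝ :=
  ![0, 3 * (w 1) ^ 2 - w 3, w 2, -(w 1)]

/-- The gradient of `S₂(z) = γφ` with respect to `z = (φ, u, v, ω)`. -/
def gradS2kdv (γ : ℝ) (w : Fin 4 → ℝ) : Fin 4 → ℝ :=
  ![γ, 0, 0, 0]

theorem hasDerivAt_fst_slice {f : ℝ → ℝ → ℝ} {t x : ℝ}
    (hf : DifferentiableAt ℝ (fun p : ℝ × ℝ => f p.1 p.2) (t, x)) :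
    HasDerivAt (fun s => f s x) (fderiv ℝ (fun p : ℝ × ℝ => f p.1 p.2) (t, x) (1, 0)) t :=
  hf.hasFDerivAt.comp_hasDerivAt (f := fun s : ℝ => (s, x)) t
    ((hasDerivAt_id t).prodMk (hasDerivAt_const t x))

theorem hasDerivAt_snd_slice {f : ℝ → ℝ → ℝ} {t x : ℝ}
    (hf : DifferentiableAt ℝ (fun p : ℝ × ℝ => f p.1 p.2) (t, x)) :
    HasDerivAt (fun y => f t y) (fderiv ℝ (fun p : ℝ × ℝ => f p.1 p.2) (t, x) (0, 1)) x :=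
  hf.hasFDerivAt.comp_hasDerivAt (f := fun y : ℝ => (t, y)) x
    ((hasDerivAt_const x t).prodMk (hasDerivAt_id x))

/-- Equality of mixed partial derivatives for a `C²` function of two real variables, together with
the existence of the mixed derivative `∂ₓ ∂ₜ f`. -/
theorem hasDerivAt_deriv_swap {f : ℝ → ℝ → ℝ}
    (hf : ContDiff ℝ 2 fun p : ℝ × ℝ => f p.1 p.2) (t x : ℝ) :
    HasDerivAt (fun y => deriv (fun s => f s y) t)
      (deriv (fun s => deriv (fun y => f s y) x) t) x := by
  have hdiff : Differentiable ℝ fun p : ℝ × ℝ => f p.1 p.2 := hf.differentiable (by norm_num)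
  have hdiff2 : Differentiable ℝ (fderiv ℝ fun p : ℝ × ℝ => f p.1 p.2) :=
    (hf.fderiv_right (m := 1) (by norm_num)).differentiable (by norm_num)
  have hsymm : IsSymmSndFDerivAt ℝ (fun p : ℝ × ℝ => f p.1 p.2) (t, x) :=
    hf.contDiffAt.isSymmSndFDerivAt (by simp)
  have ht : (fun y => deriv (fun s => f s y) t)
      = fun y => fderiv ℝ (fun p : ℝ × ℝ => f p.1 p.2) (t, y) (1, 0) :=
    funext fun y => (hasDerivAt_fst_slice (hdiff (t, y))).deriv
  have hx : (fun s => deriv (fun y => f s y) x)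
      = fun s => fderiv ℝ (fun p : ℝ × ℝ => f p.1 p.2) (s, x) (0, 1) :=
    funext fun s => (hasDerivAt_snd_slice (hdiff (s, x))).deriv
  have htx := ((hdiff2 (t, x)).hasFDerivAt.comp_hasDerivAt (f := fun y : ℝ => (t, y)) x
    ((hasDerivAt_const x t).prodMk (hasDerivAt_id x))).clm_apply
      (hasDerivAt_const x ((1, 0) : ℝ × ℝ))
  have hxt := ((hdiff2 (t, x)).hasFDerivAt.comp_hasDerivAt (f := fun s : ℝ => (s, x)) t
    ((hasDerivAt_id t).prodMk (hasDerivAt_const t x))).clm_apply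
      (hasDerivAt_const t ((0, 1) : ℝ × ℝ))
  simp only [map_zero, add_zero, Function.comp_apply] at htx hxt
  rw [ht, hx, hxt.deriv, hsymm.eq]
  exact htx

/-- If `z = (φ, u, v, ω)` satisfies the damped Hamiltonian system
`M z_t + K z_x = ∇S₁(z) + ∇S₂(z)·c + D z` pointwise, then `u_x = v`, `φ_x = u`, and `u`
satisfies the damped forced Korteweg–de Vries equation
`u_t + 6u u_x + u_xxx = αu + γc` pointwise. -/
theorem stmt_18 (α γ : ℝ) (hα : 0 < α)
    (c φ u v ω : ℝ → ℝ → ℝ)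
    (hc : Continuous fun tx : ℝ × ℝ => c tx.1 tx.2)
    (hφ : ContDiff ℝ 2 fun tx : ℝ × ℝ => φ tx.1 tx.2)
    (hu : ContDiff ℝ 2 fun tx : ℝ × ℝ => u tx.1 tx.2)
    (hv : ContDiff ℝ 1 fun tx : ℝ × ℝ => v tx.1 tx.2)
    (hω : ContDiff ℝ 1 fun tx : ℝ × ℝ => ω tx.1 tx.2)
    (hsys : ∀ t x : ℝ,
      Mkdv.mulVec ![deriv (fun s => φ s x) t, deriv (fun s => u s x) t,
          deriv (fun s => v s x) t, deriv (fun s => ω s x) t]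
        + Kkdv.mulVec ![deriv (fun y => φ t y) x, deriv (fun y => u t y) x,
            deriv (fun y => v t y) x, deriv (fun y => ω t y) x]
      = gradS1kdv ![φ t x, u t x, v t x, ω t x]
        + c t x • gradS2kdv γ ![φ t x, u t x, v t x, ω t x]
        + (Dkdv α).mulVec ![φ t x, u t x, v t x, ω t x]) :
    ∀ t x : ℝ,
      deriv (fun y => u t y) x = v t x ∧
      deriv (fun y => φ t y) x = u t x ∧
      deriv (fun s => u s x) t + 6 * u t x * deriv (fun y => u t y) x
          + deriv (deriv (deriv (fun y => u t y))) x
        = α * u t x + γ * c t x := by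
  have row0 : ∀ t x, 1 / 2 * deriv (fun s => u s x) t + deriv (fun y => ω t y) x
      = c t x * γ + α / 2 * u t x := fun t x => by
    have h := congrFun (hsys t x) 0
    simp [Mkdv, Kkdv, Dkdv, gradS1kdv, gradS2kdv, Matrix.mulVec, dotProduct,
      Fin.sum_univ_four] at h
    linarith
  have row1 : ∀ t x, -(1 / 2 * deriv (fun s => φ s x) t) + -deriv (fun y => v t y) x
      = 3 * u t x ^ 2 - ω t x + -(α / 2 * φ t x) := fun t x => by
    have h := congrFun (hsys t x) 1
    simp [Mkdv, Kkdv, Dkdv, gradS1kdv, gradS2kdv, Matrix.mulVec, dotProduct,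
      Fin.sum_univ_four] at h
    linarith
  have row2 : ∀ t x, deriv (fun y => u t y) x = v t x := fun t x => by
    have h := congrFun (hsys t x) 2
    simpa [Mkdv, Kkdv, Dkdv, gradS1kdv, gradS2kdv, Matrix.mulVec, dotProduct,
      Fin.sum_univ_four] using h
  have row3 : ∀ t x, deriv (fun y => φ t y) x = u t x := fun t x => by
    have h := congrFun (hsys t x) 3
    simpa [Mkdv, Kkdv, Dkdv, gradS1kdv, gradS2kdv, Matrix.mulVec, dotProduct,
      Fin.sum_univ_four] using h
  intro t x
  refine ⟨row2 t x, row3 t x, ?_⟩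
  have dφ : HasDerivAt (fun y => φ t y) (u t x) x :=
    row3 t x ▸ (hasDerivAt_snd_slice
      (hφ.differentiable (by norm_num) (t, x))).differentiableAt.hasDerivAt
  have du : HasDerivAt (fun y => u t y) (deriv (fun y => u t y) x) x :=
    (hasDerivAt_snd_slice (hu.differentiable (by norm_num) (t, x))).differentiableAt.hasDerivAt
  have dω : HasDerivAt (fun y => ω t y) (deriv (fun y => ω t y) x) x :=
    (hasDerivAt_snd_slice (hω.differentiable (by norm_num) (t, x))).differentiableAt.hasDerivAt
  have dφt : HasDerivAt (fun y => deriv (fun s => φ s y) t) (deriv (fun s => u s x) t) x := by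
    have h := hasDerivAt_deriv_swap hφ t x
    simpa only [row3] using h
  have huxx : deriv (deriv fun y => u t y)
      = fun y => ω t y - 3 * u t y ^ 2 - 1 / 2 * deriv (fun s => φ s y) t + α / 2 * φ t y := by
    rw [show (deriv fun y => u t y) = fun y => v t y from funext (row2 t)]
    funext y
    linarith [row1 t y]
  have huxxx := (((dω.sub ((du.pow 2).const_mul 3)).sub (dφt.const_mul (1 / 2))).add
    (dφ.const_mul (α / 2))).deriv
  have key : deriv (deriv (deriv fun y => u t y)) x
      = deriv (fun y => ω t y) x - 6 * u t x * deriv (fun y => u t y) x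
        - 1 / 2 * deriv (fun s => u s x) t + α / 2 * u t x := by
    rw [huxx]
    refine Eq.trans huxxx ?_
    norm_num
    ring
  rw [key]
  linarith [row0 t x]
end
end
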